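/- Let n and N be positive integers and let δ > 0. Then the series ∑_S e^{-δπ·Tr(S)}, where the sum runs over all positive semidefinite symmetric n×n matrices S with all entries in (1/N)·ℤ, converges to a finite value. Formally: the function T ↦ exp(-δ·π·Tr(T)/N) is summable over the set of symmetric positive semidefinite n×n matrices T with integer entries. -/

import Mathlib

open Matrix Real

lemma aux_int_summable (c : ℝ) (hc : 0 < c) :
    Summable (fun k : ℤ => Real.exp (-c * |(k : ℝ)|)) := by
  have h : Summable (fun k : ℕ => Real.exp (-c * (k : ℝ))) := by
    have := summable_geometric_of_lt_one (Real.exp_pos (-c)).le (by simpa using hc)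
    refine this.congr fun k => ?_
    rw [← Real.exp_nat_mul, mul_comm]
  refine Summable.of_nat_of_neg ?_ ?_
  · simpa using h
  · simpa using h

lemma aux_pi_summable {ι : Type*} [Fintype ι] [DecidableEq ι] (f : ℤ → ℝ) (hf : Summable f)
    (h0 : ∀ k, 0 ≤ f k) : Summable (fun x : ι → ℤ => ∏ i, f (x i)) := by
  refine summable_of_sum_le (c := ∏ _i : ι, ∑' k, f k)
    (fun x => Finset.prod_nonneg fun i _ => h0 _) fun s => ?_
  calc ∑ x ∈ s, ∏ i, f (x i)
      ≤ ∑ x ∈ Fintype.piFinset (fun i => s.image (fun x => x i)), ∏ i, f (x i) := by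
        refine Finset.sum_le_sum_of_subset_of_nonneg ?_
          (fun x _ _ => Finset.prod_nonneg fun i _ => h0 _)
        intro x hx
        rw [Fintype.mem_piFinset]
        intro i
        exact Finset.mem_image_of_mem _ hx
    _ = ∏ i, ∑ k ∈ s.image (fun x => x i), f k := by
        rw [Finset.prod_univ_sum]
    _ ≤ _ := Finset.prod_le_prod (fun i _ => Finset.sum_nonneg fun k _ => h0 k)
        (fun i _ => hf.sum_le_tsum _ (fun k _ => h0 k))

lemma aux_entry {n : ℕ} (A : Matrix (Fin n) (Fin n) ℝ) (hs : A.IsSymm) (hA : A.PosSemidef)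
    (i j : Fin n) : |A i j| ≤ A.trace := by
  have hd : ∀ k, 0 ≤ A k k := fun k => hA.diag_nonneg
  have ht : ∀ k, A k k ≤ A.trace := fun k =>
    Finset.single_le_sum (f := fun k => A k k) (fun k _ => hd k) (Finset.mem_univ k)
  have hq : ∀ t : ℝ, 0 ≤ A i i + t * A i j + (t * A j i + t * t * A j j) := fun t => by
    have := hA.dotProduct_mulVec_nonneg (Pi.single i 1 + Pi.single j t)
    simp [Matrix.mulVec_add, add_dotProduct, dotProduct_add] at this
    linarith
  have hji : A j i = A i j := hs.apply i j
  have h1 := hq 1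
  have h2 := hq (-1)
  have := ht i
  have := ht j
  rw [hji] at h1 h2
  rw [abs_le]
  constructor <;> linarith

/-- The series `∑_S e^{-δπ Tr(S)}`, over positive semidefinite symmetric `n × n`
matrices `S` with entries in `(1/N)ℤ`, converges. Writing `S = T / N` with `T` an
integer matrix, this says that `T ↦ exp (-δ * π * Tr T / N)` is summable over the
set of symmetric positive semidefinite integer matrices `T`. -/
theorem summable_exp_neg_trace_posSemidef
    (n N : ℕ) (hn : 0 < n) (hN : 0 < N) (δ : ℝ) (hδ : 0 < δ) :
    Summable (fun T : {T : Matrix (Fin n) (Fin n) ℤ //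
        T.IsSymm ∧ (T.map (Int.cast : ℤ → ℝ)).PosSemidef} =>
      Real.exp (-δ * π * ((T.1.map (Int.cast : ℤ → ℝ)).trace) / N)) := by
  have hn' : (0 : ℝ) < n := by exact_mod_cast hn
  have hN' : (0 : ℝ) < N := by exact_mod_cast hN
  have hc : 0 < δ * π / N / (n * n) := by positivity
  set c := δ * π / N / (n * n) with hcdef
  have hS := aux_pi_summable (ι := Fin n × Fin n) _ (aux_int_summable c hc)
    (fun k => (Real.exp_pos _).le)
  have hinj : Function.Injective (fun T : {T : Matrix (Fin n) (Fin n) ℤ //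
        T.IsSymm ∧ (T.map (Int.cast : ℤ → ℝ)).PosSemidef} =>
        (fun p : Fin n × Fin n => T.1 p.1 p.2)) := by
    intro S T h
    apply Subtype.ext
    ext i j
    exact congrFun h (i, j)
  refine Summable.of_nonneg_of_le (fun T => (Real.exp_pos _).le) (fun T => ?_)
    (hS.comp_injective hinj)
  simp only [Function.comp]
  rw [← Real.exp_sum, Real.exp_le_exp, ← Finset.mul_sum]
  have hb : ∑ p : Fin n × Fin n, |((T.1 p.1 p.2 : ℤ) : ℝ)|
      ≤ (n * n) * (T.1.map (Int.cast : ℤ → ℝ)).trace := by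
    refine (Finset.sum_le_card_nsmul _ _ (T.1.map (Int.cast : ℤ → ℝ)).trace
      (fun p _ => ?_)).trans (le_of_eq ?_)
    · exact aux_entry _ (T.2.1.map _) T.2.2 p.1 p.2
    · simp
  have h2 := mul_le_mul_of_nonneg_left hb hc.le
  have h3 : c * ((n * n) * (T.1.map (Int.cast : ℤ → ℝ)).trace)
      = δ * π * (T.1.map (Int.cast : ℤ → ℝ)).trace / N := by
    rw [hcdef]
    field_simp
  have h4 : -δ * π * (T.1.map (Int.cast : ℤ → ℝ)).trace / N
      = -(δ * π * (T.1.map (Int.cast : ℤ → ℝ)).trace / N) := by ring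
  rw [h4]
  linarith
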